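/- For every integer n ≥ 0, p(49n+19) ≡ 0 (mod 49). -/

import Mathlib

/-- The partition function `p(n)`: the number of partitions of `n`. -/
def p (n : ℕ) : ℕ := Fintype.card (Nat.Partition n)

/-!
Let `E = ∏ (1 - X ^ n)` and let `x`, `y`, `z`, `w` be its parts on the exponents congruent to
`0`, `1`, `2`, `5` modulo `7`; the other three parts vanish by the pentagonal number theorem. By
Jacobi's identity the exponents of `E ^ 3` are triangular numbers, so the parts of `E ^ 3` in the
classes `2`, `4`, `5` vanish, which gives polynomial relations between `x`, `y`, `z`, `w`. Under
these relations the linear system that expresses `E * ∑ p(n) X ^ n = 1` in residue classes yields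
`(K + 7 z ^ 4) ^ 2 * P₅ = 7 * z ^ 3 * K`, where `K` is the Klein quartic form of the parts and `P₅`
collects the terms `p(7n+5) X ^ (7n+5)`. Moreover `K ^ 2 = -z (x ^ 7 + y ^ 7 + w ^ 7 + 8 z ^ 7)`,
which is `-z * E ^ 7` modulo `7`, and `z = -X ^ 2 * E(X ^ 49)`. Hence `P₅ / 7` is
`± X ^ 5 * E ^ 119` modulo `7`. As `E ^ 119 ≡ E(X ^ 49) ^ 2 * E(X ^ 7) ^ 3`, the exponents that
occur in it are `7k` with `k` an exponent of `E(X ^ 7) ^ 2 * E ^ 3`, and modulo `7` the parts of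
`E ^ 3` in the classes `2`, `4`, `5`, `6` are zero.
-/

open Finset PowerSeries

section GaussianBinomial

variable {R : Type*} [CommRing R] (q : R)

/-- The finite `q`-Pochhammer symbol `(q; q)_n`. -/
def qPochhammer (n : ℕ) : R := ∏ i ∈ range n, (1 - q ^ (i + 1))

/-- The Gaussian binomial coefficient, defined by the `q`-Pascal rule so that it makes sense for
every `q` in every commutative ring. -/
def gaussBinom : ℕ → ℕ → R
  | _, 0 => 1
  | 0, _ + 1 => 0
  | m + 1, k + 1 => gaussBinom m k + q ^ (k + 1) * gaussBinom m (k + 1)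

lemma qPochhammer_succ (n : ℕ) :
    qPochhammer q (n + 1) = qPochhammer q n * (1 - q ^ (n + 1)) :=
  prod_range_succ _ n

@[simp]
lemma gaussBinom_zero_right (m : ℕ) : gaussBinom q m 0 = 1 := by cases m <;> rfl

lemma gaussBinom_succ_succ (m k : ℕ) :
    gaussBinom q (m + 1) (k + 1) = gaussBinom q m k + q ^ (k + 1) * gaussBinom q m (k + 1) := rfl

lemma gaussBinom_eq_zero_of_lt {m k : ℕ} (h : m < k) : gaussBinom q m k = 0 := by
  induction m generalizing k with
  | zero => obtain ⟨k, rfl⟩ := Nat.exists_eq_succ_of_ne_zero h.ne'; rfl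
  | succ m ih =>
    obtain ⟨k, rfl⟩ := Nat.exists_eq_succ_of_ne_zero (Nat.ne_zero_of_lt h)
    simp [gaussBinom_succ_succ, ih (k := k) (by lia), ih (k := k + 1) (by lia)]

@[simp]
lemma gaussBinom_self (m : ℕ) : gaussBinom q m m = 1 := by
  induction m with
  | zero => rfl
  | succ m ih => simp [gaussBinom_succ_succ, ih, gaussBinom_eq_zero_of_lt q m.lt_succ_self]

lemma gaussBinom_succ_succ' (m k : ℕ) :
    gaussBinom q (m + 1) (k + 1) = q ^ (m - k) * gaussBinom q m k + gaussBinom q m (k + 1) := by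
  induction m generalizing k with
  | zero => cases k <;> simp [gaussBinom]
  | succ m ih =>
    rw [gaussBinom_succ_succ]
    cases k with
    | zero =>
      have h := gaussBinom_succ_succ q m 0
      have h' := ih 0
      simp only [gaussBinom_zero_right, Nat.sub_zero] at h h' ⊢
      linear_combination q * h' - h
    | succ k =>
      have pascal := gaussBinom_succ_succ q m k
      have pascal_succ := gaussBinom_succ_succ q m (k + 1)
      have ih_k := ih k
      have ih_succ := ih (k + 1)
      rw [Nat.add_sub_add_right]
      rcases lt_or_ge k m with hk | hk
      · obtain ⟨l, rfl⟩ := Nat.exists_eq_add_of_lt hk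
        rw [show k + l + 1 - k = l + 1 by lia] at *
        rw [show k + l + 1 - (k + 1) = l by lia] at ih_succ
        linear_combination ih_k + q ^ (k + 2) * ih_succ - q ^ (l + 1) * pascal - pascal_succ
      · rw [gaussBinom_eq_zero_of_lt q (by lia : m < k + 1)] at *
        linear_combination ih_k + q ^ (k + 2) * ih_succ - q ^ (m - k) * pascal - pascal_succ

lemma gaussBinom_symm (a b : ℕ) : gaussBinom q (a + b) a = gaussBinom q (a + b) b := by
  induction a generalizing b with
  | zero => simp
  | succ a iha =>
    induction b with
    | zero => simp
    | succ b ihb =>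
      rw [show a + 1 + (b + 1) = a + 1 + b + 1 by ring, gaussBinom_succ_succ,
        gaussBinom_succ_succ', ihb, show a + 1 + b = a + (b + 1) by ring, iha,
        show a + (b + 1) - b = a + 1 by lia]
      ring

lemma gaussBinom_mul_qPochhammer (m k : ℕ) :
    gaussBinom q (m + k) k * (qPochhammer q k * qPochhammer q m) = qPochhammer q (m + k) := by
  induction k generalizing m with
  | zero => simp [qPochhammer]
  | succ k ihk =>
    induction m with
    | zero => simp [qPochhammer]
    | succ m ihm =>
      have hk := ihk (m + 1)
      rw [show m + 1 + k = m + (k + 1) by ring] at hk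
      rw [show m + 1 + (k + 1) = m + (k + 1) + 1 by ring, gaussBinom_succ_succ,
        qPochhammer_succ q (m + (k + 1))]
      simp only [qPochhammer_succ q k, qPochhammer_succ q m] at hk ihm ⊢
      linear_combination (1 - q ^ (k + 1)) * hk + q ^ (k + 1) * (1 - q ^ (m + 1)) * ihm

lemma gaussBinom_add_two (m k : ℕ) :
    gaussBinom q (m + 2) (k + 2) = q ^ (m - k) * gaussBinom q m k
      + (1 + q ^ (m + 1)) * gaussBinom q m (k + 1) + q ^ (k + 2) * gaussBinom q m (k + 2) := by
  rw [gaussBinom_succ_succ, gaussBinom_succ_succ', gaussBinom_succ_succ' q m (k + 1)]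
  rcases lt_or_ge k m with hk | hk
  · obtain ⟨l, rfl⟩ := Nat.exists_eq_add_of_lt hk
    rw [show k + l + 1 - (k + 1) = l by lia]
    ring
  · rw [gaussBinom_eq_zero_of_lt q (by lia : m < k + 1)]
    ring

lemma sum_odd_mul_second_difference (s : ℕ → R) (m : ℕ) :
    ∑ j ∈ range m, (2 * j + 1) * (s j - 2 * s (j + 1) + s (j + 2))
      = s 0 + s 1 - (2 * m + 1) * s m + (2 * m - 1) * s (m + 1) := by
  induction m with
  | zero => simp
  | succ m ih => rw [sum_range_succ, ih]; push_cast; ring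

/-- A finite form of Jacobi's identity: as `n → ∞` the Gaussian binomial coefficients tend to
`1 / (q; q)_∞`. -/
theorem qPochhammer_sq (n : ℕ) :
    qPochhammer q n ^ 2 = ∑ j ∈ range (n + 1),
      (-1) ^ j * (2 * j + 1) * q ^ (j + 1).choose 2 * gaussBinom q (2 * n + 1) (n + 1 + j) := by
  induction n with
  | zero => simp [qPochhammer]
  | succ n ih =>
    set Q : R := q ^ (n + 1)
    let s (j : ℕ) : R := (-1) ^ j * q ^ j.choose 2 * gaussBinom q (2 * n + 1) (n + j)
    have s_eq_zero (j : ℕ) (hj : n + 1 < j) : s j = 0 := by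
      simp [s, gaussBinom_eq_zero_of_lt q (by lia : 2 * n + 1 < n + j)]
    have recurrence (j : ℕ) (hj : j ∈ range (n + 2)) :
        (-1) ^ j * (2 * j + 1) * q ^ (j + 1).choose 2 * gaussBinom q (2 * n + 3) (n + 2 + j)
          = Q * ((2 * j + 1) * (s j - 2 * s (j + 1) + s (j + 2)))
            - (1 - Q) ^ 2 * ((2 * j + 1) * s (j + 1)) := by
      have choose_succ (i : ℕ) : (i + 1).choose 2 = i + i.choose 2 := by
        rw [Nat.choose_succ_succ' i 1, Nat.choose_one_right]
      obtain ⟨i, hi⟩ := Nat.exists_eq_add_of_le (Nat.lt_succ_iff.1 (mem_range.1 hj))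
      have hQ : q ^ j * q ^ i = Q := by rw [← pow_add, ← hi]
      rw [show n + 2 + j = n + j + 2 by ring, gaussBinom_add_two,
        show 2 * n + 1 - (n + j) = i by lia]
      simp only [s, choose_succ]
      linear_combination
        (-1) ^ j * (2 * j + 1) * q ^ j.choose 2 * gaussBinom q (2 * n + 1) (n + j) * hQ
    have boundary : s 0 + s 1 = 0 := by
      simp [s, gaussBinom_symm q (n + 1) n, show 2 * n + 1 = n + 1 + n by ring]
    have tail : ∑ j ∈ range (n + 2), (2 * j + 1) * s (j + 1) = - qPochhammer q n ^ 2 := by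
      rw [sum_range_succ, s_eq_zero (n + 1 + 1) (by lia), mul_zero, add_zero, ih, ← sum_neg_distrib]
      refine sum_congr rfl fun j _ ↦ ?_
      simp only [s, add_right_comm n 1 j, ← add_assoc]
      ring
    rw [show 2 * (n + 1) + 1 = 2 * n + 3 by ring, sum_congr rfl recurrence, sum_sub_distrib,
      ← mul_sum, ← mul_sum, sum_odd_mul_second_difference, tail, boundary,
      s_eq_zero (n + 2) (by lia), s_eq_zero (n + 2 + 1) (by lia), qPochhammer_succ]
    ring

end GaussianBinomial

section JacobiIdentity

variable (R : Type*) [CommRing R]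

/-- Reduction of power series modulo `X ^ (N + 1)`, used to compare a formal limit with its finite
approximations. -/
noncomputable def truncationHom (N : ℕ) : R⟦X⟧ →+* R⟦X⟧ ⧸ Ideal.span {(X : R⟦X⟧) ^ (N + 1)} :=
  Ideal.Quotient.mk _

variable {R}

lemma truncationHom_eq_iff {N : ℕ} {F G : R⟦X⟧} :
    truncationHom R N F = truncationHom R N G ↔ ∀ m ≤ N, coeff m F = coeff m G := by
  simp [truncationHom, Ideal.Quotient.mk_eq_mk_iff_sub_mem, Ideal.mem_span_singleton,
    X_pow_dvd_iff, sub_eq_zero]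

lemma truncationHom_X_pow_eq_zero {N k : ℕ} (h : N < k) : truncationHom R N (X ^ k) = 0 := by
  rw [truncationHom, Ideal.Quotient.eq_zero_iff_mem, Ideal.mem_span_singleton]
  exact pow_dvd_pow X h

lemma truncationHom_qPochhammer {N a : ℕ} (h : N ≤ a) :
    truncationHom R N (qPochhammer X a) = truncationHom R N (pentagonalSeries R) := by
  have stable (b : ℕ) (hab : a ≤ b) :
      truncationHom R N (qPochhammer X b) = truncationHom R N (qPochhammer X a) := by
    induction b, hab using Nat.le_induction with
    | base => rfl
    | succ b hb ih =>
      rw [qPochhammer_succ, map_mul, map_sub, truncationHom_X_pow_eq_zero (by lia), map_one, ih,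
        sub_zero, mul_one]
  refine truncationHom_eq_iff.2 fun m hm ↦ ?_
  obtain ⟨b, hb, hab⟩ := ((Filter.tendsto_finset_range.eventually
    (coeff_prod_one_sub_X_pow_eventually_eq R m)).and (Filter.eventually_ge_atTop a)).exists
  rw [← hb, ← truncationHom_eq_iff.1 (stable b hab) m hm, qPochhammer]

lemma isUnit_pentagonalSeries : IsUnit (pentagonalSeries R) := by
  have h := truncationHom_eq_iff.1 (truncationHom_qPochhammer (R := R) le_rfl) 0 le_rfl
  rw [isUnit_iff_constantCoeff, ← coeff_zero_eq_constantCoeff_apply, ← h]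
  simp [qPochhammer]

lemma truncationHom_gaussBinom_mul {N m k : ℕ} (hm : N ≤ m) (hk : N ≤ k) :
    truncationHom R N (gaussBinom X (m + k) k * pentagonalSeries R) = 1 := by
  have h := congrArg (truncationHom R N) (gaussBinom_mul_qPochhammer X m k)
  simp only [map_mul, truncationHom_qPochhammer, hm, hk, hm.trans (Nat.le_add_right m k)] at h
  refine (isUnit_pentagonalSeries.map (truncationHom R N)).mul_right_cancel ?_
  rw [map_mul, mul_assoc, h, one_mul]

theorem truncationHom_pentagonalSeries_pow_three (N : ℕ) :
    truncationHom R N (pentagonalSeries R ^ 3) = truncationHom R N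
      (∑ j ∈ range (N + 1), monomial ((j + 1).choose 2) ((-1) ^ j * (2 * j + 1))) := by
  have term_eq (j : ℕ) : truncationHom R N
      (X ^ (j + 1).choose 2 * gaussBinom X (2 * (2 * N) + 1) (2 * N + 1 + j) * pentagonalSeries R)
        = if j ≤ N then truncationHom R N (X ^ (j + 1).choose 2) else 0 := by
    split_ifs with hj
    · rw [show 2 * (2 * N) + 1 = (2 * N - j) + (2 * N + 1 + j) by lia, mul_assoc, map_mul,
        truncationHom_gaussBinom_mul (by lia) (by lia), mul_one]
    · have : N < (j + 1).choose 2 := by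
        rw [Nat.choose_succ_succ' j 1, Nat.choose_one_right]; lia
      rw [mul_assoc, map_mul, truncationHom_X_pow_eq_zero this, zero_mul]
  have cube_eq : truncationHom R N (pentagonalSeries R ^ 3)
      = truncationHom R N (qPochhammer X (2 * N) ^ 2 * pentagonalSeries R) := by
    rw [pow_succ (pentagonalSeries R), map_mul, map_mul, map_pow, map_pow,
      truncationHom_qPochhammer (by lia)]
  rw [cube_eq, qPochhammer_sq, sum_mul, map_sum, map_sum]
  refine (sum_subset (range_mono (by lia)) fun j _ hj ↦ ?_).symm.trans
    (sum_congr rfl fun j hj ↦ ?_)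
  · rw [mul_assoc _ (X ^ _), mul_assoc, map_mul, term_eq, if_neg (by simpa using hj), mul_zero]
  · rw [mul_assoc _ (X ^ _), mul_assoc, map_mul, term_eq, if_pos (by simpa using hj), ← map_mul,
      monomial_eq_C_mul_X_pow]
    simp [map_ofNat (C (R := R))]

theorem coeff_pentagonalSeries_pow_three_eq_zero {n : ℕ} (hn : ∀ j, n ≠ (j + 1).choose 2) :
    coeff n (pentagonalSeries R ^ 3) = 0 := by
  rw [truncationHom_eq_iff.1 (truncationHom_pentagonalSeries_pow_three n) n le_rfl, map_sum]
  exact sum_eq_zero fun j _ ↦ by rw [coeff_monomial, if_neg (hn j)]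

end JacobiIdentity

section KleinQuartic

variable {R : Type*} [CommRing R] {x y w z : R}

/-- The relations satisfied by the `7`-dissection `x + y + w + z` of `∏ (1 - X ^ n)`, whose parts
`x`, `y`, `w`, `z` are supported on the exponents congruent to `0`, `1`, `5`, `2` modulo `7`. The
indices of the fields are the residue classes of the relations. -/
structure IsSevenDissection (x y w z : R) : Prop where
  rel_two : x ^ 2 * z + x * y ^ 2 + z ^ 2 * w = 0
  rel_four : y ^ 2 * z + y * w ^ 2 + z ^ 2 * x = 0
  rel_five : w ^ 2 * z + w * x ^ 2 + z ^ 2 * y = 0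
  mul_mul : x * y * w = z ^ 3

lemma IsSevenDissection.rotate (h : IsSevenDissection x y w z) : IsSevenDissection y w x z :=
  ⟨h.rel_four, h.rel_five, h.rel_two, by rw [← h.mul_mul]; ring⟩

/-- The Klein quartic form `x ^ 3 * y + y ^ 3 * w + w ^ 3 * x`, completed by the term `z ^ 4` that
makes its square a multiple of `z` under the relations of `IsSevenDissection`. -/
def kleinForm (x y w z : R) : R := x ^ 3 * y + y ^ 3 * w + w ^ 3 * x + z ^ 4

lemma kleinForm_rotate (x y w z : R) : kleinForm y w x z = kleinForm x y w z := by
  simp only [kleinForm]; ring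

/-- With `cofactorV`, the multipliers that eliminate every unknown except `P 5` from the linear
system in `IsSevenDissection.kleinForm_add_sq_mul`: together with `7 * z ^ 3 * kleinForm x y w z`
they form, up to a common factor, a row of cofactors. -/
def cofactorU (x y w z : R) : R :=
  kleinForm x y w z * (x ^ 2 * y - 2 * y * z * w) + 7 * z ^ 4 * (2 * w ^ 3 + 3 * y * z * w)

/-- The second family of multipliers, see `cofactorU`. -/
def cofactorV (x y w z : R) : R :=
  kleinForm x y w z * (z * w ^ 2 - 2 * y * z ^ 2) + 7 * z ^ 3 * (y * z ^ 3 - x ^ 4)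

namespace IsSevenDissection

theorem kleinForm_sq (h : IsSevenDissection x y w z) :
    kleinForm x y w z ^ 2 = -z * (x ^ 7 + y ^ 7 + w ^ 7 + 8 * z ^ 7) := by
  simp only [kleinForm]
  linear_combination (x ^ 5 - y ^ 3 * z ^ 2 + 3 * x * y * z ^ 3) * h.rel_two
    + (y ^ 5 - w ^ 3 * z ^ 2 + 3 * y * w * z ^ 3) * h.rel_four
    + (w ^ 5 - x ^ 3 * z ^ 2 + 3 * w * x * z ^ 3) * h.rel_five
    + (2 * (x ^ 2 * y ^ 3 + y ^ 2 * w ^ 3 + w ^ 2 * x ^ 3) - 9 * z ^ 5) * h.mul_mul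

lemma cofactor_column_five (h : IsSevenDissection x y w z) :
    x * cofactorU x y w z + y * cofactorU y w x z + z * (7 * z ^ 3 * kleinForm x y w z)
      + w * cofactorU w x y z = (kleinForm x y w z + 7 * z ^ 4) ^ 2 := by
  linear_combination (norm := (simp only [cofactorU, kleinForm]; ring))
    (-6 * z * kleinForm x y w z + 63 * z ^ 5) * h.mul_mul

lemma cofactor_column_zero (h : IsSevenDissection x y w z) :
    x * (7 * z ^ 3 * kleinForm x y w z) + y * cofactorV x y w z + z * cofactorV w x y z
      + w * cofactorU x y w z = 0 := by
  linear_combination (norm := (simp only [cofactorU, cofactorV, kleinForm]; ring))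
    (x * (kleinForm x y w z + 7 * z ^ 4) + 7 * z ^ 3 * (y ^ 2 - x * z)) * h.mul_mul
    + (21 * z ^ 5 - z * (kleinForm x y w z + 7 * z ^ 4)) * h.rel_four
    + 7 * z ^ 3 * w ^ 2 * h.rel_five

lemma cofactor_column_one (h : IsSevenDissection x y w z) :
    x * cofactorV x y w z + y * cofactorV w x y z + z * cofactorU w x y z
      + w * cofactorU y w x z = 0 := by
  linear_combination (norm := (simp only [cofactorU, cofactorV, kleinForm]; ring))
    (y * (kleinForm x y w z + 7 * z ^ 4) - 7 * z ^ 3 * w ^ 2) * h.rel_four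
    - 7 * z ^ 2 * (y ^ 3 + w ^ 2 * x) * h.mul_mul - 7 * z ^ 2 * x ^ 3 * h.rel_two
    + 21 * x * z ^ 4 * h.rel_five

theorem kleinForm_add_sq_mul (h : IsSevenDissection x y w z) {P : ZMod 7 → R}
    (hP : ∀ r, x * P r + y * P (r - 1) + z * P (r - 2) + w * P (r - 5)
      = if r = 0 then 1 else 0) :
    (kleinForm x y w z + 7 * z ^ 4) ^ 2 * P 5 = 7 * z ^ 3 * kleinForm x y w z := by
  have row0 : x * P 0 + y * P 6 + z * P 5 + w * P 2 = 1 := hP 0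
  have row1 : x * P 1 + y * P 0 + z * P 6 + w * P 3 = 0 := hP 1
  have row2 : x * P 2 + y * P 1 + z * P 0 + w * P 4 = 0 := hP 2
  have row3 : x * P 3 + y * P 2 + z * P 1 + w * P 5 = 0 := hP 3
  have row4 : x * P 4 + y * P 3 + z * P 2 + w * P 6 = 0 := hP 4
  have row5 : x * P 5 + y * P 4 + z * P 3 + w * P 0 = 0 := hP 5
  have row6 : x * P 6 + y * P 5 + z * P 4 + w * P 1 = 0 := hP 6
  have K₁ : kleinForm y w x z = kleinForm x y w z := kleinForm_rotate x y w z
  have K₂ : kleinForm w x y z = kleinForm x y w z := (kleinForm_rotate y w x z).trans K₁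
  have column0 := h.cofactor_column_zero
  have column6 := h.rotate.cofactor_column_zero
  have column2 := h.rotate.rotate.cofactor_column_zero
  have column1 := h.cofactor_column_one
  have column3 := h.rotate.cofactor_column_one
  have column4 := h.rotate.rotate.cofactor_column_one
  have column5 := h.cofactor_column_five
  rw [K₁] at column6
  rw [K₂] at column2
  linear_combination (7 * z ^ 3 * kleinForm x y w z) * row0
    + cofactorV x y w z * row1 + cofactorV w x y z * row2 + cofactorU w x y z * row3
    + cofactorV y w x z * row4 + cofactorU x y w z * row5 + cofactorU y w x z * row6
    - P 5 * column5 - P 0 * column0 - P 6 * column6 - P 2 * column2 - P 1 * column1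
    - P 3 * column3 - P 4 * column4

end IsSevenDissection

end KleinQuartic

section Multisection

variable {R : Type*} [CommRing R] {m : ℕ}

/-- The multisection of a power series: the part supported on the exponents in the residue class
`r` modulo `m`. -/
noncomputable def multisection (r : ZMod m) (F : R⟦X⟧) : R⟦X⟧ :=
  mk fun n ↦ if (n : ZMod m) = r then coeff n F else 0

lemma coeff_multisection (r : ZMod m) (F : R⟦X⟧) (n : ℕ) :
    coeff n (multisection r F) = if (n : ZMod m) = r then coeff n F else 0 :=
  coeff_mk n _

lemma multisection_eq_zero {r : ZMod m} {F : R⟦X⟧}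
    (h : ∀ n : ℕ, (n : ZMod m) = r → coeff n F = 0) : multisection r F = 0 := by
  ext n
  simpa [coeff_multisection] using h n

lemma multisection_one (r : ZMod m) : multisection r (1 : R⟦X⟧) = if r = 0 then 1 else 0 := by
  ext n
  rcases eq_or_ne n 0 with rfl | hn
  · simp [coeff_multisection, apply_ite (coeff (R := R) 0), eq_comm]
  · simp [coeff_multisection, coeff_one, hn, apply_ite (coeff (R := R) n)]

lemma sum_multisection [NeZero m] (F : R⟦X⟧) : ∑ r : ZMod m, multisection r F = F := by
  ext n
  simp [coeff_multisection]

lemma multisection_mul [NeZero m] (r : ZMod m) (F G : R⟦X⟧) :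
    multisection r (F * G) = ∑ s, multisection s F * multisection (r - s) G := by
  ext n
  simp only [coeff_multisection, coeff_mul, map_sum]
  rw [sum_comm]
  simp only [ite_mul, zero_mul, sum_ite_eq, mem_univ, if_true]
  split_ifs with hn
  · refine sum_congr rfl fun ij hij ↦ ?_
    simp [← hn, ← mem_antidiagonal.1 hij]
  · refine (sum_eq_zero fun ij hij ↦ ?_).symm
    rw [← mem_antidiagonal.1 hij, Nat.cast_add, add_comm, ← eq_sub_iff_add_eq] at hn
    rw [if_neg hn, mul_zero]

lemma map_multisection {S : Type*} [CommRing S] (f : R →+* S) (r : ZMod m) (F : R⟦X⟧) :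
    PowerSeries.map f (multisection r F) = multisection r (PowerSeries.map f F) := by
  ext n
  simp [coeff_multisection, apply_ite f]

lemma multisection_expand (hm : m ≠ 0) (r : ZMod m) (F : R⟦X⟧) :
    multisection r (expand m hm F) = if r = 0 then expand m hm F else 0 := by
  ext n
  by_cases hn : m ∣ n
  · simp [coeff_multisection, (ZMod.natCast_eq_zero_iff n m).2 hn, apply_ite (coeff (R := R) n),
      eq_comm]
  · simp [coeff_multisection, coeff_expand_of_not_dvd m hm F hn, apply_ite (coeff (R := R) n)]

lemma multisection_expand_mul [NeZero m] (hm : m ≠ 0) (r : ZMod m) (F G : R⟦X⟧) :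
    multisection r (expand m hm F * G) = expand m hm F * multisection r G := by
  simp [multisection_mul, multisection_expand]

lemma coeff_eq_zero_of_multisection_eq_zero {r : ZMod m} {F : R⟦X⟧} (h : multisection r F = 0)
    {n : ℕ} (hn : (n : ZMod m) = r) : coeff n F = 0 := by
  simpa [coeff_multisection, hn] using congrArg (coeff n) h

end Multisection

section Reduction

/-- Reduction modulo `m` of the coefficients of an integral power series. -/
noncomputable def reduction (m : ℕ) : ℤ⟦X⟧ →+* (ZMod m)⟦X⟧ :=
  PowerSeries.map (Int.castRingHom (ZMod m))

lemma coeff_reduction (m n : ℕ) (F : ℤ⟦X⟧) :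
    coeff n (reduction m F) = (coeff n F : ℤ) :=
  coeff_map _ n F

lemma reduction_natCast_self (m : ℕ) : reduction m m = 0 := by
  rw [map_natCast, ← map_natCast (C (R := ZMod m)), ZMod.natCast_self, map_zero]

lemma natCast_dvd_of_reduction_eq_zero {m : ℕ} {F : ℤ⟦X⟧} (h : reduction m F = 0) :
    (m : ℤ⟦X⟧) ∣ F := by
  refine ⟨mk fun n ↦ coeff n F / m, ext fun n ↦ ?_⟩
  have hn : (m : ℤ) ∣ coeff n F := by
    rw [← ZMod.intCast_zmod_eq_zero_iff_dvd, ← coeff_reduction, h, map_zero]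
  rw [← map_natCast (C (R := ℤ)), coeff_C_mul, coeff_mk, Int.mul_ediv_cancel' hn]

lemma reduction_pentagonalSeries (m : ℕ) :
    reduction m (pentagonalSeries ℤ) = pentagonalSeries (ZMod m) := by
  ext n
  rw [coeff_reduction]
  by_cases hn : n ∈ Set.range pentagonal
  · obtain ⟨k, rfl⟩ := hn
    simp only [coeff_pentagonalSeries_pentagonal, Int.cast_id]
  · simp only [coeff_pentagonalSeries_eq_zero _ hn, Int.cast_zero]

lemma expand_eq_pow (q : ℕ) [Fact q.Prime] (F : (ZMod q)⟦X⟧) :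
    expand q (NeZero.ne q) F = F ^ q := by
  have h := MvPowerSeries.map_frobenius_expand (R := ZMod q) (σ := Unit) q (NeZero.ne q) (f := F)
  rwa [ZMod.frobenius_zmod, MvPowerSeries.map_id] at h

end Reduction

section Partition

/-- The generating function of the partition numbers. -/
noncomputable def partitionSeries (R : Type*) [CommRing R] : R⟦X⟧ :=
  PowerSeries.mk fun n ↦ (p n : R)

theorem pentagonalSeries_mul_partitionSeries (R : Type*) [CommRing R] :
    pentagonalSeries R * partitionSeries R = 1 := by
  let _ : TopologicalSpace R := ⊥
  have : DiscreteTopology R := ⟨rfl⟩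
  open scoped PowerSeries.WithPiTopology in
  have h := (WithPiTopology.hasProd_one_sub_X_pow R).mul
    (Nat.Partition.hasProd_powerSeriesMk_card_restricted R fun _ ↦ True)
  have geom_mul (i : ℕ) : (1 - X ^ (i + 1)) * ∑' j : ℕ, (X : R⟦X⟧) ^ ((i + 1) * j) = 1 := by
    simp only [pow_mul]
    rw [mul_comm]
    exact WithPiTopology.tsum_pow_mul_one_sub_of_constantCoeff_eq_zero (by simp)
  simp only [if_true, geom_mul] at h
  rw [← h.unique hasProd_one, partitionSeries]
  congr 2
  ext n
  simp [p, Nat.Partition.restricted]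

end Partition

section EulerDissection

variable {R : Type*} [CommRing R]

lemma sum_zmod_seven {M : Type*} [AddCommMonoid M] (f : ZMod 7 → M) :
    ∑ r, f r = f 0 + f 1 + f 2 + f 3 + f 4 + f 5 + f 6 :=
  Fin.sum_univ_seven f

lemma multisection_pentagonalSeries_eq_zero {r : ZMod 7} (hr : r = 3 ∨ r = 4 ∨ r = 6) :
    multisection r (pentagonalSeries R) = 0 := by
  have pentagonal_mod : ∀ r k : ZMod 7, r = 3 ∨ r = 4 ∨ r = 6 → 2 * r ≠ k * (3 * k - 1) := by
    decide
  refine multisection_eq_zero fun n hn ↦ coeff_pentagonalSeries_eq_zero R ?_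
  rintro ⟨k, rfl⟩
  refine pentagonal_mod r k hr ?_
  rw [← hn]
  exact_mod_cast congrArg (Int.cast : ℤ → ZMod 7) (two_mul_natCast_pentagonal k)

lemma multisection_pentagonalSeries_pow_three_eq_zero {r : ZMod 7} (hr : r = 2 ∨ r = 4 ∨ r = 5) :
    multisection r (pentagonalSeries R ^ 3) = 0 := by
  have triangular_mod : ∀ r j : ZMod 7, r = 2 ∨ r = 4 ∨ r = 5 → (j + 1) * j ≠ r * 2 := by decide
  refine multisection_eq_zero fun n hn ↦ coeff_pentagonalSeries_pow_three_eq_zero fun j hj ↦ ?_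
  have triangular : (j + 1) * j = n * 2 := by
    simpa [hj] using Nat.add_one_mul_choose_eq j 1
  refine triangular_mod r j hr ?_
  rw [← hn]
  exact_mod_cast congrArg (Nat.cast : ℕ → ZMod 7) triangular

/-- The part of Euler's product `∏ (1 - X ^ n)` supported on the exponents congruent to `r`
modulo `7`. -/
noncomputable def eulerPart (r : ZMod 7) : ℤ⟦X⟧ := multisection r (pentagonalSeries ℤ)

lemma eulerPart_three : eulerPart 3 = 0 := multisection_pentagonalSeries_eq_zero (by decide)

lemma eulerPart_four : eulerPart 4 = 0 := multisection_pentagonalSeries_eq_zero (by decide)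

lemma eulerPart_six : eulerPart 6 = 0 := multisection_pentagonalSeries_eq_zero (by decide)

lemma sum_eulerPart :
    eulerPart 0 + eulerPart 1 + eulerPart 5 + eulerPart 2 = pentagonalSeries ℤ := by
  rw [← sum_multisection (m := 7) (pentagonalSeries ℤ), sum_zmod_seven]
  simp only [← eulerPart.eq_def, eulerPart_three, eulerPart_four, eulerPart_six]
  ring

lemma multisection_pentagonalSeries_mul (r : ZMod 7) (F : ℤ⟦X⟧) :
    multisection r (pentagonalSeries ℤ * F)
      = eulerPart 0 * multisection r F + eulerPart 1 * multisection (r - 1) F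
        + eulerPart 5 * multisection (r - 5) F + eulerPart 2 * multisection (r - 2) F := by
  rw [multisection_mul, sum_zmod_seven]
  simp only [← eulerPart.eq_def, eulerPart_three, eulerPart_four, eulerPart_six, sub_zero]
  ring

lemma multisection_pentagonalSeries_pow_three (r : ZMod 7) :
    multisection r (pentagonalSeries ℤ ^ 3)
      = eulerPart 0 ^ 2 * eulerPart r + eulerPart 1 ^ 2 * eulerPart (r - 2)
        + eulerPart 5 ^ 2 * eulerPart (r - 3) + eulerPart 2 ^ 2 * eulerPart (r - 4)
        + 2 * (eulerPart 0 * eulerPart 1 * eulerPart (r - 1)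
          + eulerPart 0 * eulerPart 5 * eulerPart (r - 5)
          + eulerPart 0 * eulerPart 2 * eulerPart (r - 2)
          + eulerPart 1 * eulerPart 5 * eulerPart (r - 6)
          + eulerPart 1 * eulerPart 2 * eulerPart (r - 3)
          + eulerPart 5 * eulerPart 2 * eulerPart r) := by
  simp only [pow_three, multisection_pentagonalSeries_mul, ← eulerPart.eq_def, sub_sub]
  reduce_mod_char
  ring

lemma eulerPart_five_ne_zero : eulerPart 5 ≠ 0 := by
  intro h
  have : coeff 5 (eulerPart 5) = 1 := by
    simpa [eulerPart, coeff_multisection, pentagonal] using coeff_pentagonalSeries_pentagonal ℤ 2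
  simp [h] at this

theorem isSevenDissection_eulerPart :
    IsSevenDissection (eulerPart 0) (eulerPart 1) (eulerPart 5) (eulerPart 2) := by
  have three_ne_zero : (3 : ℤ⟦X⟧) ≠ 0 := by
    rw [← map_ofNat (C (R := ℤ)) 3, map_ne_zero_iff _ C_injective]
    exact three_ne_zero
  have cube (r : ZMod 7) (hr : r = 2 ∨ r = 4 ∨ r = 5) :=
    (multisection_pentagonalSeries_pow_three r).symm.trans
      (multisection_pentagonalSeries_pow_three_eq_zero hr)
  have h₂ := cube 2 (by decide)
  have h₄ := cube 4 (by decide)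
  have h₅ := cube 5 (by decide)
  reduce_mod_char at h₂ h₄ h₅
  simp only [eulerPart_three, eulerPart_four, eulerPart_six] at h₂ h₄ h₅
  have rel_two : eulerPart 0 ^ 2 * eulerPart 2 + eulerPart 0 * eulerPart 1 ^ 2
      + eulerPart 2 ^ 2 * eulerPart 5 = 0 :=
    mul_left_cancel₀ three_ne_zero (by linear_combination h₂)
  have rel_four : eulerPart 1 ^ 2 * eulerPart 2 + eulerPart 1 * eulerPart 5 ^ 2
      + eulerPart 2 ^ 2 * eulerPart 0 = 0 :=
    mul_left_cancel₀ three_ne_zero (by linear_combination h₄)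
  refine ⟨rel_two, rel_four, mul_left_cancel₀ three_ne_zero (by linear_combination h₅),
    mul_left_cancel₀ eulerPart_five_ne_zero ?_⟩
  linear_combination eulerPart 0 * rel_four - eulerPart 2 * rel_two

lemma multisection_six_pentagonalSeries_pow_three :
    multisection (6 : ZMod 7) (pentagonalSeries ℤ ^ 3) = 7 * eulerPart 2 ^ 3 := by
  rw [multisection_pentagonalSeries_pow_three]
  reduce_mod_char
  simp only [eulerPart_three, eulerPart_four, eulerPart_six]
  linear_combination 6 * isSevenDissection_eulerPart.mul_mul

lemma pentagonal_seven_mul_sub_one (l : ℤ) :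
    pentagonal (7 * l - 1) = 49 * pentagonal l + 2 := by
  have pentagonal_l := two_mul_natCast_pentagonal l
  have pentagonal_seven_l := two_mul_natCast_pentagonal (7 * l - 1)
  zify
  linarith

lemma exists_eq_seven_mul_sub_one_of_pentagonal {k : ℤ} (h : (pentagonal k : ZMod 7) = 2) :
    ∃ l : ℤ, k = 7 * l - 1 := by
  have root_mod : ∀ a : ZMod 7, 2 * 2 = a * (3 * a - 1) → a + 1 = 0 := by decide
  have hk : ((k + 1 : ℤ) : ZMod 7) = 0 := by
    rw [Int.cast_add, Int.cast_one]
    refine root_mod k ?_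
    have pentagonal_mod := congrArg (Int.cast : ℤ → ZMod 7) (two_mul_natCast_pentagonal k)
    push_cast at pentagonal_mod
    rwa [h] at pentagonal_mod
  obtain ⟨l, hl⟩ := (ZMod.intCast_zmod_eq_zero_iff_dvd _ 7).1 hk
  exact ⟨l, by push_cast at hl; linarith⟩

lemma coeff_forty_nine_mul_add_two_pentagonalSeries (n : ℕ) :
    coeff (49 * n + 2) (pentagonalSeries R) = -coeff n (pentagonalSeries R) := by
  by_cases hn : n ∈ Set.range pentagonal
  · obtain ⟨l, rfl⟩ := hn
    rw [← pentagonal_seven_mul_sub_one, coeff_pentagonalSeries_pentagonal,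
      coeff_pentagonalSeries_pentagonal, show 7 * l - 1 = l + (2 * (3 * l - 1) + 1) by ring,
      Int.negOnePow_add, Int.negOnePow_two_mul_add_one]
    simp
  · rw [coeff_pentagonalSeries_eq_zero R hn, coeff_pentagonalSeries_eq_zero R, neg_zero]
    rintro ⟨k, hk⟩
    obtain ⟨l, rfl⟩ := exists_eq_seven_mul_sub_one_of_pentagonal (k := k) (by
      rw [hk]; push_cast; reduce_mod_char)
    exact hn ⟨l, by rw [pentagonal_seven_mul_sub_one] at hk; lia⟩

theorem eulerPart_two :
    eulerPart 2 = -(X ^ 2 * expand 49 (by decide) (pentagonalSeries ℤ)) := by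
  ext n
  rw [eulerPart, coeff_multisection, map_neg, coeff_X_pow_mul']
  by_cases h : ∃ m, n = 49 * m + 2
  · obtain ⟨m, rfl⟩ := h
    rw [if_pos (by push_cast; reduce_mod_char), if_pos (by lia), Nat.add_sub_cancel,
      coeff_expand_mul, coeff_forty_nine_mul_add_two_pentagonalSeries]
  · have left_eq_zero (hn : (n : ZMod 7) = 2) : coeff n (pentagonalSeries ℤ) = 0 := by
      refine coeff_pentagonalSeries_eq_zero ℤ ?_
      rintro ⟨k, rfl⟩
      obtain ⟨l, rfl⟩ := exists_eq_seven_mul_sub_one_of_pentagonal hn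
      exact h ⟨pentagonal l, pentagonal_seven_mul_sub_one l⟩
    have right_eq_zero (hn : 2 ≤ n) :
        coeff (n - 2) (expand 49 (by decide) (pentagonalSeries ℤ)) = 0 :=
      coeff_expand_of_not_dvd 49 _ _ fun ⟨m, hm⟩ ↦ h ⟨m, by lia⟩
    rw [ite_eq_right_iff.2 left_eq_zero, ite_eq_right_iff.2 right_eq_zero, neg_zero]

end EulerDissection

section ReductionModSeven

local instance : Fact (Nat.Prime 7) := ⟨by decide⟩

lemma reduction_seven : reduction 7 7 = 0 := reduction_natCast_self 7

lemma reduction_sum_eulerPart_pow_seven :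
    reduction 7 (eulerPart 0 ^ 7 + eulerPart 1 ^ 7 + eulerPart 5 ^ 7 + eulerPart 2 ^ 7)
      = pentagonalSeries (ZMod 7) ^ 7 := by
  rw [← reduction_pentagonalSeries, ← sum_eulerPart]
  simp only [map_add, map_pow, ← expand_eq_pow]

lemma reduction_eulerPart_two :
    reduction 7 (eulerPart 2) = -(X ^ 2 * pentagonalSeries (ZMod 7) ^ 49) := by
  have expand_49 : expand 49 (by decide) (pentagonalSeries (ZMod 7))
      = pentagonalSeries (ZMod 7) ^ 49 := by
    rw [expand_mul 7 (by decide) 7 (by decide), expand_eq_pow, expand_eq_pow, ← pow_mul]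
  rw [eulerPart_two, map_neg, map_mul, map_pow, ← expand_49, ← reduction_pentagonalSeries]
  simp only [reduction, map_expand, map_X]

/-- The Klein quartic form at the components of the `7`-dissection of Euler's product. -/
noncomputable def eulerKleinForm : ℤ⟦X⟧ :=
  kleinForm (eulerPart 0) (eulerPart 1) (eulerPart 5) (eulerPart 2)

lemma reduction_eulerKleinForm_sq :
    reduction 7 eulerKleinForm ^ 2 = X ^ 2 * pentagonalSeries (ZMod 7) ^ 56 := by
  have seven := reduction_seven
  have sum_pow := reduction_sum_eulerPart_pow_seven
  have two := reduction_eulerPart_two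
  rw [← map_pow, eulerKleinForm, isSevenDissection_eulerPart.kleinForm_sq]
  simp only [map_mul, map_neg, map_add, map_pow] at sum_pow ⊢
  have eight : reduction 7 8 = 1 := by
    rw [show (8 : ℤ⟦X⟧) = 7 + 1 by norm_num, map_add, seven, map_one, zero_add]
  rw [eight, one_mul, sum_pow, two]
  ring

theorem eulerKleinForm_add_sq_mul :
    (eulerKleinForm + 7 * eulerPart 2 ^ 4) ^ 2 * multisection (5 : ZMod 7) (partitionSeries ℤ)
      = 7 * eulerPart 2 ^ 3 * eulerKleinForm := by
  refine isSevenDissection_eulerPart.kleinForm_add_sq_mul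
    (P := fun r ↦ multisection r (partitionSeries ℤ)) fun r ↦ ?_
  rw [← multisection_one, ← pentagonalSeries_mul_partitionSeries,
    multisection_pentagonalSeries_mul]
  ring

lemma reduction_eulerKleinForm_ne_zero : reduction 7 eulerKleinForm ≠ 0 := by
  rw [← sq_eq_zero_iff.ne, reduction_eulerKleinForm_sq]
  exact mul_ne_zero (pow_ne_zero _ X_ne_zero) (pow_ne_zero _ isUnit_pentagonalSeries.ne_zero)

theorem reduction_multisection_five_partitionSeries :
    reduction 7 (multisection (5 : ZMod 7) (partitionSeries ℤ)) = 0 := by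
  have h := congrArg (reduction 7) eulerKleinForm_add_sq_mul
  simp only [map_mul, map_pow, map_add, reduction_seven, zero_mul, add_zero] at h
  exact (mul_eq_zero.1 h).resolve_left (pow_ne_zero _ reduction_eulerKleinForm_ne_zero)

lemma reduction_eulerKleinForm_mul {D : ℤ⟦X⟧}
    (hD : multisection (5 : ZMod 7) (partitionSeries ℤ) = 7 * D) :
    reduction 7 eulerKleinForm * reduction 7 D = reduction 7 (eulerPart 2) ^ 3 := by
  have seven_ne_zero : (7 : ℤ⟦X⟧) ≠ 0 := by
    rw [← map_ofNat (C (R := ℤ)) 7, map_ne_zero_iff _ C_injective]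
    decide
  have cancel_seven :
      (eulerKleinForm + 7 * eulerPart 2 ^ 4) ^ 2 * D = eulerPart 2 ^ 3 * eulerKleinForm := by
    refine mul_left_cancel₀ seven_ne_zero ?_
    linear_combination eulerKleinForm_add_sq_mul
      - (eulerKleinForm + 7 * eulerPart 2 ^ 4) ^ 2 * hD
  have h := congrArg (reduction 7) cancel_seven
  simp only [map_mul, map_pow, map_add, reduction_seven, zero_mul, add_zero] at h
  refine mul_left_cancel₀ reduction_eulerKleinForm_ne_zero ?_
  linear_combination h

theorem reduction_eq_or_eq_neg_of_multisection_five_eq {D : ℤ⟦X⟧}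
    (hD : multisection (5 : ZMod 7) (partitionSeries ℤ) = 7 * D) :
    reduction 7 D = X ^ 5 * pentagonalSeries (ZMod 7) ^ 119 ∨
      reduction 7 D = -(X ^ 5 * pentagonalSeries (ZMod 7) ^ 119) := by
  refine sq_eq_sq_iff_eq_or_eq_neg.1
    (mul_left_cancel₀ (pow_ne_zero 2 reduction_eulerKleinForm_ne_zero) ?_)
  calc reduction 7 eulerKleinForm ^ 2 * reduction 7 D ^ 2
      = reduction 7 (eulerPart 2) ^ 6 := by
        rw [← mul_pow, reduction_eulerKleinForm_mul hD, ← pow_mul]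
    _ = reduction 7 eulerKleinForm ^ 2 * (X ^ 5 * pentagonalSeries (ZMod 7) ^ 119) ^ 2 := by
        rw [reduction_eulerPart_two, reduction_eulerKleinForm_sq]
        ring

lemma multisection_pentagonalSeries_pow_three_eq_zero_mod_seven {r : ZMod 7}
    (hr : r = 2 ∨ r = 4 ∨ r = 5 ∨ r = 6) :
    multisection r (pentagonalSeries (ZMod 7) ^ 3) = 0 := by
  rcases hr with hr | hr | hr | rfl
  · exact multisection_pentagonalSeries_pow_three_eq_zero (.inl hr)
  · exact multisection_pentagonalSeries_pow_three_eq_zero (.inr (.inl hr))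
  · exact multisection_pentagonalSeries_pow_three_eq_zero (.inr (.inr hr))
  · rw [← reduction_pentagonalSeries, ← map_pow, reduction, ← map_multisection,
      multisection_six_pentagonalSeries_pow_three, ← reduction, map_mul, reduction_seven, zero_mul]

lemma coeff_X_pow_five_mul_pentagonalSeries_pow {n : ℕ}
    (hn : n % 7 = 2 ∨ n % 7 = 4 ∨ n % 7 = 5 ∨ n % 7 = 6) :
    coeff (7 * n + 5) (X ^ 5 * pentagonalSeries (ZMod 7) ^ 119) = 0 := by
  set e := pentagonalSeries (ZMod 7)
  have pow_eq : e ^ 119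
      = expand 7 (by decide) (expand 7 (by decide) (e ^ 2) * e ^ 3) := by
    rw [expand_eq_pow, expand_eq_pow]
    ring
  have hr : (n : ZMod 7) = 2 ∨ (n : ZMod 7) = 4 ∨ (n : ZMod 7) = 5 ∨ (n : ZMod 7) = 6 := by
    rw [← ZMod.natCast_mod n 7]
    rcases hn with h | h | h | h <;> rw [h] <;> decide
  rw [coeff_X_pow_mul, pow_eq, coeff_expand_mul]
  refine coeff_eq_zero_of_multisection_eq_zero (r := (n : ZMod 7)) ?_ rfl
  rw [multisection_expand_mul, multisection_pentagonalSeries_pow_three_eq_zero_mod_seven hr,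
    mul_zero]

end ReductionModSeven

theorem p_49n_add_19_mod_49_general (n : ℕ)
    (hn : n % 7 = 2 ∨ n % 7 = 4 ∨ n % 7 = 5 ∨ n % 7 = 6) : p (7 * n + 5) % 49 = 0 := by
  obtain ⟨D, hD⟩ := natCast_dvd_of_reduction_eq_zero reduction_multisection_five_partitionSeries
  have coeff_D : coeff (7 * n + 5) (reduction 7 D) = 0 := by
    have vanish := coeff_X_pow_five_mul_pentagonalSeries_pow hn
    rcases reduction_eq_or_eq_neg_of_multisection_five_eq hD with h | h
    · rw [h, vanish]
    · rw [h, map_neg, vanish, neg_zero]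
  have p_eq : (p (7 * n + 5) : ℤ) = 7 * coeff (7 * n + 5) D := by
    have residue : ((7 * n + 5 : ℕ) : ZMod 7) = 5 := by push_cast; reduce_mod_char
    have h := congrArg (coeff (7 * n + 5)) hD
    rwa [coeff_multisection, if_pos residue, partitionSeries, coeff_mk,
      ← map_natCast (C (R := ℤ)), coeff_C_mul] at h
  rw [coeff_reduction, ZMod.intCast_zmod_eq_zero_iff_dvd] at coeff_D
  lia

/-- Ramanujan-type congruence: `p(49n + 19) ≡ 0 (mod 49)` for all `n ≥ 0`. -/
theorem p_49n_add_19_mod_49 (n : ℕ) : p (49 * n + 19) % 49 = 0 := by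
  rw [show 49 * n + 19 = 7 * (7 * n + 2) + 5 by ring]
  exact p_49n_add_19_mod_49_general (7 * n + 2) (by lia)
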